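/- Let β = 8/75, let X be large, write ℒ = log X, and for j ≥ 1 let P_j = {(y₁,…,y_j) ∈ ℝ^j : β ≤ y_j < y_{j−1} < ⋯ < y₁ and y₁ + ⋯ + y_{j−1} + 2y_j ≤ 1 + (log 3)/ℒ}. Let E ⊆ P_j and let k be an integer with j+1 ≤ k ≤ 9. Define S_k*(E) as the sum of 1/(p₁⋯p_{k−1}) over all tuples of primes p₁ > p₂ > ⋯ > p_j and p_j ≤ p_{j+1} ≤ ⋯ ≤ p_{k−1} such that (log p₁/ℒ, …, log p_j/ℒ) ∈ E and X/8 < p₁ p₂ ⋯ p_{k−1} · p_{k−1} ≤ X. Then there is an absolute constant C (independent of X, E) with S_k*(E) ≤ C/ℒ. -/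

import Mathlib

/-!
Every prime of an admissible tuple lies in `[X ^ β, X]`. Summing the reciprocals over all primes
but the last one gives a factor `∑ 1 / p = O(1 / β)` each, by Mertens' bound
`∑_{p ≤ n} log p / p ≤ log n + log 4`. Once these are fixed, with product `M`, the last prime `r`
satisfies `X / 8 < M r ^ 2 ≤ X`, so it ranges over an interval with bounded ratio of endpoints
above `X ^ β`; there Chebyshev's bound `θ(x) ≤ x log 4` gives `∑ 1 / r = O(1 / log X)`.
Finally, a product of `k` factors `≥ X ^ β` that is `≤ X` forces `k β ≤ 1`, so the bound is uniform
in `k`.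
-/

open Real

/-- The polytope `P_j = {y : β ≤ y_j < ⋯ < y₁, y₁ + ⋯ + y_{j−1} + 2y_j ≤ 1 + log 3/ℒ}`
with `β = 8/75` and `ℒ = log X` (0-indexed, so the last coordinate is `y_j`). -/
def Pset (X : ℝ) (j : ℕ) : Set (Fin j → ℝ) :=
  {y | (∀ i₁ i₂ : Fin j, i₁ < i₂ → y i₂ < y i₁) ∧
       ∀ i : Fin j, (i : ℕ) = j - 1 →
         8/75 ≤ y i ∧ (∑ i', y i') + y i ≤ 1 + Real.log 3 / Real.log X}

/-- `SkSumStar X j k E` is the sum of `1/(p₁⋯p_{k−1})` over tuples of primes with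
`p₁ > ⋯ > p_j`, `p_j ≤ p_{j+1} ≤ ⋯ ≤ p_{k−1}`,
`(log p₁/ℒ, …, log p_j/ℒ) ∈ E` and `X/8 < p₁⋯p_{k−1}·p_{k−1} ≤ X`. -/
noncomputable def SkSumStar (X : ℝ) (j k : ℕ) (E : Set (Fin j → ℝ)) : ℝ :=
  ∑' p : {p : Fin (k-1) → ℕ //
      (∀ i, (p i).Prime) ∧
      (∀ i₁ i₂ : Fin (k-1), i₁ < i₂ → (i₂ : ℕ) < j → p i₂ < p i₁) ∧
      (∀ i₁ i₂ : Fin (k-1), j - 1 ≤ (i₁ : ℕ) → i₁ ≤ i₂ → p i₁ ≤ p i₂) ∧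
      (∀ h : j ≤ k - 1,
        (fun i : Fin j => Real.log (p (Fin.castLE h i)) / Real.log X) ∈ E) ∧
      (∀ i : Fin (k-1), (i : ℕ) = k - 2 →
        X / 8 < (((∏ i', p i') * p i : ℕ) : ℝ) ∧ (((∏ i', p i') * p i : ℕ) : ℝ) ≤ X)},
    1 / ∏ i, (p.1 i : ℝ)

lemma prod_primesLE_pow_div_dvd_factorial (n : ℕ) :
    ∏ p ∈ Nat.primesLE n, p ^ (n / p) ∣ n.factorial := by
  refine Finset.prod_dvd_of_isRelPrime (fun p hp q hq hpq ↦ ?_) fun p hp ↦ ?_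
  · exact Nat.coprime_iff_isRelPrime.mp <| Nat.Coprime.pow _ _ <|
      (Nat.coprime_primes (Nat.prime_of_mem_primesLE hp) (Nat.prime_of_mem_primesLE hq)).mpr hpq
  · rw [(Nat.prime_of_mem_primesLE hp).pow_dvd_factorial_iff (b := Nat.log p n + 2) (by lia)]
    simpa using Finset.single_le_sum (f := fun i ↦ n / p ^ i) (fun _ _ ↦ Nat.zero_le _)
      (Finset.mem_Ico.mpr ⟨le_rfl, by lia⟩ : 1 ∈ Finset.Ico 1 (Nat.log p n + 2))

lemma sum_primesLE_div_mul_log_le (n : ℕ) :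
    ∑ p ∈ Nat.primesLE n, ((n / p : ℕ) : ℝ) * log p ≤ n * log n := by
  have hpos : 0 < ∏ p ∈ Nat.primesLE n, p ^ (n / p) :=
    Finset.prod_pos fun p hp ↦ pow_pos (Nat.prime_of_mem_primesLE hp).pos _
  have hle : ∏ p ∈ Nat.primesLE n, p ^ (n / p) ≤ n ^ n :=
    (Nat.le_of_dvd n.factorial_pos (prod_primesLE_pow_div_dvd_factorial n)).trans
      n.factorial_le_pow
  calc ∑ p ∈ Nat.primesLE n, ((n / p : ℕ) : ℝ) * log p
      = log (∏ p ∈ Nat.primesLE n, p ^ (n / p) : ℕ) := by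
        push_cast
        rw [log_prod fun p hp ↦ by simp [(Nat.prime_of_mem_primesLE hp).ne_zero]]
        simp only [log_pow]
    _ ≤ log (n ^ n : ℕ) := log_le_log (by exact_mod_cast hpos) (by exact_mod_cast hle)
    _ = n * log n := by rw [Nat.cast_pow, log_pow]

theorem sum_primesLE_log_div_le (n : ℕ) :
    ∑ p ∈ Nat.primesLE n, log p / p ≤ log n + log 4 := by
  rcases n.eq_zero_or_pos with rfl | hn
  · simpa using log_nonneg (by norm_num)
  have hn' : (0 : ℝ) < n := by exact_mod_cast hn
  have hterm (p : ℕ) : n * (log p / p) ≤ ((n / p : ℕ) : ℝ) * log p + log p := by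
    have hdiv : (n / p : ℝ) ≤ (n / p : ℕ) + 1 := by
      rw [← Nat.floor_div_eq_div (K := ℝ)]
      exact (Nat.lt_floor_add_one _).le
    calc n * (log p / p) = n / p * log p := by ring
      _ ≤ ((n / p : ℕ) + 1) * log p := by gcongr
      _ = _ := by ring
  refine le_of_mul_le_mul_left ?_ hn'
  calc n * ∑ p ∈ Nat.primesLE n, log p / p
      ≤ ∑ p ∈ Nat.primesLE n, (((n / p : ℕ) : ℝ) * log p + log p) := by
        rw [Finset.mul_sum]
        exact Finset.sum_le_sum fun p _ ↦ hterm p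
    _ = ∑ p ∈ Nat.primesLE n, ((n / p : ℕ) : ℝ) * log p + Chebyshev.theta n := by
        rw [Finset.sum_add_distrib, Chebyshev.theta_eq_sum_primesLE_log]
    _ ≤ n * log n + log 4 * n :=
        add_le_add (sum_primesLE_div_mul_log_le n) (Chebyshev.theta_le_log4_mul_x hn'.le)
    _ = n * (log n + log 4) := by ring

/-- The finset of primes in the real interval `[a, b]`; the primes of the tuples summed over in
`SkSumStar` are drawn from `primesIcc (X ^ β) X`. -/
noncomputable def primesIcc (a b : ℝ) : Finset ℕ :=
  {p ∈ Nat.primesLE ⌊b⌋₊ | a ≤ (p : ℝ)}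

lemma mem_primesIcc {a b : ℝ} {p : ℕ} :
    p ∈ primesIcc a b ↔ p.Prime ∧ a ≤ p ∧ (p : ℝ) ≤ b := by
  simp only [primesIcc, Finset.mem_filter, Nat.mem_primesLE]
  constructor
  · rintro ⟨⟨hb, hp⟩, ha⟩
    exact ⟨hp, ha, (Nat.le_floor_iff' hp.ne_zero).mp hb⟩
  · rintro ⟨hp, ha, hb⟩
    exact ⟨⟨Nat.le_floor hb, hp⟩, ha⟩

lemma mul_log_le_log_of_mem_primesIcc {X β b : ℝ} (hX : 0 < X) {p : ℕ}
    (hp : p ∈ primesIcc (X ^ β) b) : β * log X ≤ log p := by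
  obtain ⟨hprime, hle, -⟩ := mem_primesIcc.mp hp
  exact (rpow_le_iff_le_log hX (by exact_mod_cast hprime.pos)).mp hle

lemma sum_inv_le_sum_log_div {B : Finset ℕ} {t : ℝ} (ht : 0 < t) (hB : ∀ r ∈ B, t ≤ log r) :
    ∑ r ∈ B, (r : ℝ)⁻¹ ≤ (∑ r ∈ B, log r / r) / t := by
  rw [Finset.sum_div]
  refine Finset.sum_le_sum fun r hr ↦ ?_
  rw [div_right_comm, inv_eq_one_div]
  gcongr
  exact (one_le_div ht).mpr (hB r hr)

theorem sum_inv_primesIcc_rpow_le {X β : ℝ} (hX : 2 ≤ X) (hβ : 0 < β) :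
    ∑ p ∈ primesIcc (X ^ β) X, (p : ℝ)⁻¹ ≤ 3 / β := by
  have hL : 0 < log X := log_pos (by linarith)
  have hlog4 : log 4 = 2 * log 2 := by
    rw [← log_rpow two_pos]
    norm_num
  have hmertens : ∑ p ∈ primesIcc (X ^ β) X, log p / p ≤ 3 * log X :=
    calc ∑ p ∈ primesIcc (X ^ β) X, log p / p
        ≤ ∑ p ∈ Nat.primesLE ⌊X⌋₊, log p / p :=
          Finset.sum_le_sum_of_subset_of_nonneg (Finset.filter_subset _ _) fun p _ _ ↦
            div_nonneg (log_natCast_nonneg p) p.cast_nonneg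
      _ ≤ log ⌊X⌋₊ + log 4 := sum_primesLE_log_div_le ⌊X⌋₊
      _ ≤ log X + 2 * log X := by
          rw [hlog4]
          gcongr
          · exact_mod_cast Nat.floor_pos.mpr (by linarith)
          · exact Nat.floor_le (by linarith)
      _ = 3 * log X := by ring
  calc ∑ p ∈ primesIcc (X ^ β) X, (p : ℝ)⁻¹
      ≤ (∑ p ∈ primesIcc (X ^ β) X, log p / p) / (β * log X) :=
        sum_inv_le_sum_log_div (by positivity) fun p hp ↦
          mul_log_le_log_of_mem_primesIcc (by linarith) hp
    _ ≤ 3 * log X / (β * log X) := by gcongr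
    _ = 3 / β := mul_div_mul_right _ _ hL.ne'

lemma sum_log_div_primesIcc_le {a b : ℝ} (ha : 0 < a) (hb : 0 ≤ b) :
    ∑ p ∈ primesIcc a b, log p / p ≤ log 4 * (b / a) :=
  calc ∑ p ∈ primesIcc a b, log p / p
      ≤ ∑ p ∈ primesIcc a b, log p / a := by
        refine Finset.sum_le_sum fun p hp ↦ ?_
        exact div_le_div_of_nonneg_left (log_natCast_nonneg p) ha (mem_primesIcc.mp hp).2.1
    _ ≤ Chebyshev.theta b / a := by
        rw [← Finset.sum_div, Chebyshev.theta_eq_sum_primesLE, primesIcc]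
        gcongr ?_ / a
        exact Finset.sum_le_sum_of_subset_of_nonneg (Finset.filter_subset _ _)
          fun p _ _ ↦ log_natCast_nonneg p
    _ ≤ log 4 * b / a := by
        gcongr
        exact Chebyshev.theta_le_log4_mul_x hb
    _ = log 4 * (b / a) := mul_div_assoc _ _ _

theorem sum_inv_primes_le_of_mul_sq_mem_Ioc {B : Finset ℕ} {u v M t : ℝ}
    (hu : 0 < u) (hM : 0 < M) (ht : 0 < t) (hprime : ∀ r ∈ B, r.Prime)
    (hlog : ∀ r ∈ B, t ≤ log r) (hsq : ∀ r ∈ B, M * (r : ℝ) ^ 2 ∈ Set.Ioc u v) :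
    ∑ r ∈ B, (r : ℝ)⁻¹ ≤ log 4 * √(v / u) / t := by
  have hsub : B ⊆ primesIcc √(u / M) √(v / M) := by
    intro r hr
    obtain ⟨hlo, hhi⟩ := hsq r hr
    refine mem_primesIcc.mpr ⟨hprime r hr, ?_, ?_⟩
    · exact sqrt_le_iff.mpr ⟨r.cast_nonneg, (div_le_iff₀' hM).mpr hlo.le⟩
    · exact le_sqrt_of_sq_le ((le_div_iff₀' hM).mpr hhi)
  calc ∑ r ∈ B, (r : ℝ)⁻¹
      ≤ (∑ r ∈ B, log r / r) / t := sum_inv_le_sum_log_div ht hlog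
    _ ≤ (∑ r ∈ primesIcc √(u / M) √(v / M), log r / r) / t := by
        gcongr ?_ / t
        exact Finset.sum_le_sum_of_subset_of_nonneg hsub fun r _ _ ↦
          div_nonneg (log_natCast_nonneg r) r.cast_nonneg
    _ ≤ log 4 * (√(v / M) / √(u / M)) / t := by
        gcongr
        exact sum_log_div_primesIcc_le (by positivity) (sqrt_nonneg _)
    _ = log 4 * √(v / u) / t := by
        rw [← sqrt_div' _ (by positivity), div_div_div_cancel_right₀ hM.ne']

theorem sum_prod_le_pow_mul_of_sum_last_le {α R : Type*} [CommSemiring R] [PartialOrder R]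
    [IsOrderedRing R] {f : α → R} (hf : ∀ a, 0 ≤ f a) {m : ℕ} {A : Finset α}
    {T : Finset (Fin (m + 1) → α)} {c : R} (hA : ∀ p ∈ T, ∀ i : Fin m, p i.castSucc ∈ A)
    (hc : ∀ q : Fin m → α, (∀ i, q i ∈ A) → ∀ B : Finset α,
      (∀ r ∈ B, Fin.snoc (α := fun _ ↦ α) q r ∈ T) → ∑ r ∈ B, f r ≤ c) :
    ∑ p ∈ T, ∏ i, f (p i) ≤ (∑ a ∈ A, f a) ^ m * c := by
  classical
  let init (p : Fin (m + 1) → α) : Fin m → α := Fin.init (α := fun _ ↦ α) p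
  have hfiber (q : Fin m → α) (hq : q ∈ Fintype.piFinset fun _ ↦ A) :
      ∑ p ∈ T with init p = q, ∏ i, f (p i) ≤ (∏ i, f (q i)) * c := by
    have hsnoc {p : Fin (m + 1) → α} (hp : p ∈ T.filter (init · = q)) :
        Fin.snoc (α := fun _ ↦ α) q (p (Fin.last m)) = p := by
      rw [← (Finset.mem_filter.mp hp).2]
      exact Fin.snoc_init_self p
    have hlast_inj : Set.InjOn (fun p : Fin (m + 1) → α ↦ p (Fin.last m))
        (T.filter (init · = q)) := by
      intro p hp p' hp' (hlast : p (Fin.last m) = p' (Fin.last m))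
      rw [← hsnoc hp, ← hsnoc hp', hlast]
    calc ∑ p ∈ T with init p = q, ∏ i, f (p i)
        = (∏ i, f (q i)) * ∑ p ∈ T with init p = q, f (p (Fin.last m)) := by
          rw [Finset.mul_sum]
          refine Finset.sum_congr rfl fun p hp ↦ ?_
          rw [Fin.prod_univ_castSucc, ← (Finset.mem_filter.mp hp).2]
          rfl
      _ = (∏ i, f (q i)) * ∑ r ∈ (T.filter (init · = q)).image (· (Fin.last m)), f r := by
          rw [Finset.sum_image hlast_inj]
      _ ≤ (∏ i, f (q i)) * c := by
          refine mul_le_mul_of_nonneg_left ?_ (Finset.prod_nonneg fun i _ ↦ hf _)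
          refine hc q (Fintype.mem_piFinset.mp hq) _ fun r hr ↦ ?_
          obtain ⟨p, hp, rfl⟩ := Finset.mem_image.mp hr
          rw [hsnoc hp]
          exact (Finset.mem_filter.mp hp).1
  calc ∑ p ∈ T, ∏ i, f (p i)
      = ∑ q ∈ Fintype.piFinset fun _ ↦ A, ∑ p ∈ T with init p = q, ∏ i, f (p i) :=
        (Finset.sum_fiberwise_of_maps_to
          (fun p hp ↦ Fintype.mem_piFinset.mpr (hA p hp)) _).symm
    _ ≤ ∑ q ∈ Fintype.piFinset fun _ ↦ A, (∏ i, f (q i)) * c := Finset.sum_le_sum hfiber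
    _ = (∑ a ∈ A, f a) ^ m * c := by rw [← Finset.sum_mul, Finset.sum_pow']

section PrimeTuples

variable {X β : ℝ} {m : ℕ}

lemma add_two_le_inv_of_prod_mul_last_le (hX : 1 < X) (hβ : 0 < β) {p : Fin (m + 1) → ℕ}
    (hp : ∀ i, p i ∈ primesIcc (X ^ β) X)
    (hle : (((∏ i, p i) * p (Fin.last m) : ℕ) : ℝ) ≤ X) : (m + 2 : ℝ) ≤ β⁻¹ := by
  have hL : 0 < log X := log_pos hX
  have hlog (i) : β * log X ≤ log (p i) :=
    mul_log_le_log_of_mem_primesIcc (by linarith) (hp i)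
  have hne (i) : (p i : ℝ) ≠ 0 := by exact_mod_cast (mem_primesIcc.mp (hp i)).1.ne_zero
  have hsum : (m + 1) * (β * log X) ≤ ∑ i, log (p i) := by
    simpa using Finset.card_nsmul_le_sum Finset.univ (fun i ↦ log (p i)) _ fun i _ ↦ hlog i
  have hprod : ∑ i, log (p i) + log (p (Fin.last m)) ≤ log X := by
    have hprod_ne : ∏ i, (p i : ℝ) ≠ 0 := Finset.prod_ne_zero_iff.mpr fun i _ ↦ hne i
    rw [← log_prod fun i _ ↦ hne i, ← log_mul hprod_ne (hne _)]
    push_cast at hle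
    exact log_le_log (lt_of_le_of_ne (by positivity) (mul_ne_zero hprod_ne (hne _)).symm) hle
  have hmul : (m + 2) * β * log X ≤ 1 * log X := by linarith [hlog (Fin.last m)]
  rw [← one_div, le_div_iff₀ hβ]
  exact le_of_mul_le_mul_right hmul hL

lemma sum_prod_inv_primes_le_pow (hX : 2 ≤ X) (hβ : 0 < β) {T : Finset (Fin (m + 1) → ℕ)}
    (hT : ∀ p ∈ T, ∀ i, p i ∈ primesIcc (X ^ β) X)
    (hsize : ∀ p ∈ T, (((∏ i, p i) * p (Fin.last m) : ℕ) : ℝ) ∈ Set.Ioc (X / 8) X) :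
    ∑ p ∈ T, ∏ i, (p i : ℝ)⁻¹ ≤ (3 / β) ^ m * (log 4 * √8 / (β * log X)) := by
  have hX0 : 0 < X := by linarith
  have hL : 0 < log X := log_pos (by linarith)
  have hlast (q : Fin m → ℕ) (hq : ∀ i, q i ∈ primesIcc (X ^ β) X) (B : Finset ℕ)
      (hB : ∀ r ∈ B, Fin.snoc (α := fun _ ↦ ℕ) q r ∈ T) :
      ∑ r ∈ B, (r : ℝ)⁻¹ ≤ log 4 * √8 / (β * log X) := by
    have hr {r : ℕ} (h : r ∈ B) : r ∈ primesIcc (X ^ β) X := by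
      simpa using hT _ (hB r h) (Fin.last m)
    have hM : 0 < ∏ i, (q i : ℝ) :=
      Finset.prod_pos fun i _ ↦ by exact_mod_cast (mem_primesIcc.mp (hq i)).1.pos
    have hratio : X / (X / 8) = 8 := by field_simp
    rw [← hratio]
    refine sum_inv_primes_le_of_mul_sq_mem_Ioc (by positivity) hM (by positivity)
      (fun r h ↦ (mem_primesIcc.mp (hr h)).1)
      (fun r h ↦ mul_log_le_log_of_mem_primesIcc hX0 (hr h)) fun r h ↦ ?_
    simpa [Fin.prod_univ_castSucc, mul_assoc, pow_two] using hsize _ (hB r h)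
  calc ∑ p ∈ T, ∏ i, (p i : ℝ)⁻¹
      ≤ (∑ p ∈ primesIcc (X ^ β) X, (p : ℝ)⁻¹) ^ m * (log 4 * √8 / (β * log X)) :=
        sum_prod_le_pow_mul_of_sum_last_le (fun _ ↦ by positivity) (fun p hp i ↦ hT p hp _) hlast
    _ ≤ (3 / β) ^ m * (log 4 * √8 / (β * log X)) := by
        gcongr
        exact sum_inv_primesIcc_rpow_le hX hβ

theorem sum_prod_inv_primes_le (hX : 2 ≤ X) (hβ : 0 < β) {T : Finset (Fin (m + 1) → ℕ)}
    (hT : ∀ p ∈ T, ∀ i, p i ∈ primesIcc (X ^ β) X)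
    (hsize : ∀ p ∈ T, (((∏ i, p i) * p (Fin.last m) : ℕ) : ℝ) ∈ Set.Ioc (X / 8) X) :
    ∑ p ∈ T, ∏ i, (p i : ℝ)⁻¹ ≤ (3 / β) ^ ⌊β⁻¹⌋₊ * (log 4 * √8 / β) / log X := by
  have hL : 0 < log X := log_pos (by linarith)
  rcases T.eq_empty_or_nonempty with rfl | ⟨p, hp⟩
  · rw [Finset.sum_empty]
    positivity
  have hm : (m + 2 : ℝ) ≤ β⁻¹ :=
    add_two_le_inv_of_prod_mul_last_le (by linarith) hβ (hT p hp) (hsize p hp).2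
  have hbase : 1 ≤ 3 / β := by
    rw [div_eq_mul_inv]
    linarith [m.cast_nonneg (α := ℝ)]
  calc ∑ p ∈ T, ∏ i, (p i : ℝ)⁻¹
      ≤ (3 / β) ^ m * (log 4 * √8 / (β * log X)) := sum_prod_inv_primes_le_pow hX hβ hT hsize
    _ ≤ (3 / β) ^ ⌊β⁻¹⌋₊ * (log 4 * √8 / (β * log X)) := by
        gcongr ?_ * _
        exact pow_le_pow_right₀ hbase (Nat.le_floor (by linarith))
    _ = (3 / β) ^ ⌊β⁻¹⌋₊ * (log 4 * √8 / β) / log X := by ring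

end PrimeTuples

lemma cast_le_of_prod_mul_le {ι : Type*} [Fintype ι] {p : ι → ℕ} (hp : ∀ i, p i ≠ 0) {X : ℝ}
    {l : ι} (hle : (((∏ i, p i) * p l : ℕ) : ℝ) ≤ X) (i : ι) : (p i : ℝ) ≤ X := by
  refine le_trans ?_ hle
  have hdvd : p i ∣ (∏ i, p i) * p l := (Finset.dvd_prod_of_mem p (Finset.mem_univ i)).mul_right _
  exact_mod_cast Nat.le_of_dvd
    (Nat.pos_of_ne_zero (mul_ne_zero (Finset.prod_ne_zero_iff.mpr fun i _ ↦ hp i) (hp l))) hdvd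

lemma rpow_le_of_log_div_log_mem_Ici {X β : ℝ} (hX : 1 < X) {j n : ℕ} (hj : 1 ≤ j) (hjn : j ≤ n)
    {p : Fin n → ℕ} (hp : ∀ i, p i ≠ 0)
    (hmono : ∀ i₁ i₂ : Fin n, j - 1 ≤ (i₁ : ℕ) → i₁ ≤ i₂ → p i₁ ≤ p i₂)
    (hmem : (fun i : Fin j ↦ log (p (Fin.castLE hjn i)) / log X) ∈ Set.Ici fun _ ↦ β)
    (i : Fin n) : X ^ β ≤ p i := by
  have hhead (i : Fin j) : X ^ β ≤ p (Fin.castLE hjn i) := by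
    rw [rpow_le_iff_le_log (by linarith) (by exact_mod_cast Nat.pos_of_ne_zero (hp _)),
      ← le_div_iff₀ (log_pos hX)]
    exact hmem i
  rcases lt_or_ge (i : ℕ) j with hij | hij
  · exact hhead ⟨i, hij⟩
  · have hle : p (Fin.castLE hjn ⟨j - 1, by lia⟩) ≤ p i := hmono _ _ le_rfl (by
      simp only [Fin.le_def, Fin.val_castLE]
      lia)
    exact (hhead _).trans (by exact_mod_cast hle)

lemma Pset_subset_Ici (X : ℝ) (j : ℕ) : Pset X j ⊆ Set.Ici fun _ ↦ 8 / 75 := by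
  rintro y ⟨hanti, hlast⟩ i
  have hj := i.pos
  refine (hlast ⟨j - 1, by lia⟩ rfl).1.trans (StrictAnti.antitone (fun i₁ i₂ ↦ hanti i₁ i₂) ?_)
  exact Fin.le_def.mpr (by simp only; lia)

theorem lemma22ii_general {β : ℝ} (hβ : 0 < β) :
    ∃ C > 0, ∀ X : ℝ, 2 ≤ X → ∀ j : ℕ, 1 ≤ j → ∀ k : ℕ, j + 1 ≤ k →
    ∀ E : Set (Fin j → ℝ), (E ⊆ Set.Ici fun _ ↦ β) →
    SkSumStar X j k E ≤ C / log X := by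
  refine ⟨(3 / β) ^ ⌊β⁻¹⌋₊ * (log 4 * √8 / β), by positivity, fun X hX j hj k hjk E hE ↦ ?_⟩
  obtain ⟨m, rfl⟩ : ∃ m, k = m + 2 := ⟨k - 2, by lia⟩
  refine tsum_le_of_sum_le (fun p ↦ by positivity) fun s ↦ ?_
  let T : Finset (Fin (m + 1) → ℕ) := s.map (Function.Embedding.subtype _)
  have hsum : ∑ p ∈ T, ∏ i, (p i : ℝ)⁻¹ = ∑ p ∈ s, 1 / ∏ i, (p.1 i : ℝ) := by
    simp only [T, Finset.sum_map, Function.Embedding.subtype_apply, Finset.prod_inv_distrib,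
      one_div]
    rfl
  have hT : ∀ p ∈ T, (∀ i, p i ∈ primesIcc (X ^ β) X) ∧
      (((∏ i, p i) * p (Fin.last m) : ℕ) : ℝ) ∈ Set.Ioc (X / 8) X := by
    intro p hp
    obtain ⟨⟨p, hprime, -, hmono, hmem, hsize⟩, -, rfl⟩ := Finset.mem_map.mp hp
    have hne (i) : p i ≠ 0 := (hprime i).ne_zero
    exact ⟨fun i ↦ mem_primesIcc.mpr ⟨hprime i,
      rpow_le_of_log_div_log_mem_Ici (by linarith) hj (by lia) hne hmono (hE (hmem (by lia))) i,
      cast_le_of_prod_mul_le hne (hsize (Fin.last m) rfl).2 i⟩, hsize (Fin.last m) rfl⟩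
  rw [← hsum]
  exact sum_prod_inv_primes_le hX hβ (fun p hp ↦ (hT p hp).1) fun p hp ↦ (hT p hp).2

theorem lemma22ii :
    ∃ C > 0, ∃ X₀ : ℝ, ∀ X : ℝ, X₀ ≤ X →
    ∀ j : ℕ, 1 ≤ j → ∀ k : ℕ, j + 1 ≤ k → k ≤ 9 →
    ∀ E : Set (Fin j → ℝ), E ⊆ Pset X j →
    SkSumStar X j k E ≤ C / Real.log X := by
  obtain ⟨C, hC, hbound⟩ := lemma22ii_general (β := 8 / 75) (by norm_num)
  exact ⟨C, hC, 2, fun X hX j hj k hjk _ E hE ↦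
    hbound X hX j hj k hjk E (hE.trans (Pset_subset_Ici X j))⟩
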